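/- Let p be a polynomial with real coefficients and let a be a real number. If the function x ↦ p.eval x has a local extremum (local maximum or local minimum) at a, then (X − C a)^2 divides p − C (p.eval a); equivalently, the polynomial in E given by p.comp (C a + X) − C (p.eval a) is divisible by X^2. -/

import Mathlib

open Polynomial

theorem fermat_double_root (p : Polynomial ℝ) (a : ℝ)
    (h : IsLocalExtr (fun x : ℝ => p.eval x) a) :
    (X - C a) ^ 2 ∣ p - C (p.eval a) ∧
      (X : Polynomial ℝ) ^ 2 ∣ p.comp (C a + X) - C (p.eval a) := by
  have hd : p.derivative.eval a = 0 := h.hasDerivAt_eq_zero (p.hasDerivAt a)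
  have h1 : (X - C a) ^ 2 ∣ p - C (p.eval a) := by
    obtain ⟨q, hq⟩ : (X - C a) ∣ p - C (p.eval a) := X_sub_C_dvd_sub_C_eval
    have hq0 : q.eval a = 0 := by
      have := congrArg (fun r => (derivative r).eval a) hq
      simpa [hd] using this.symm
    obtain ⟨r, hr⟩ := dvd_iff_isRoot.mpr hq0
    exact ⟨r, by rw [hq, hr]; ring⟩
  refine ⟨h1, ?_⟩
  obtain ⟨r, hr⟩ := h1
  refine ⟨r.comp (C a + X), ?_⟩
  have := congrArg (fun s => s.comp (C a + X)) hr
  simpa using this
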